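/- Let {C₁,…,C₉} be a complete set of Pauli classes in dimension d = 8 (n = 3 qubits). Then there exists a maximal commuting Pauli class S such that every member of S is equal up to phase to a member of C₁ ∪ ⋯ ∪ C₅ and S is not equal up to phase (as a set of operators) to any of C₁,…,C₅; moreover S is unique: any two maximal commuting Pauli classes with these properties contain the same operators up to phase. -/

import Mathlib

open Matrix

noncomputable section

/-- Matrices on the Hilbert space of `n` qubits, with rows and columns indexed by
bit strings `Fin n → Fin 2`. -/
abbrev QMat (n : ℕ) := Matrix (Fin n → Fin 2) (Fin n → Fin 2) ℂ

/-- The single-qubit identity. -/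
def pI : Matrix (Fin 2) (Fin 2) ℂ := 1

/-- The single-qubit Pauli X. -/
def pX : Matrix (Fin 2) (Fin 2) ℂ := !![0, 1; 1, 0]

/-- The single-qubit Pauli Y. -/
def pY : Matrix (Fin 2) (Fin 2) ℂ := !![0, -Complex.I; Complex.I, 0]

/-- The single-qubit Pauli Z. -/
def pZ : Matrix (Fin 2) (Fin 2) ℂ := !![1, 0; 0, -1]

/-- The `n`-fold Kronecker product `W 0 ⊗ ⋯ ⊗ W (n-1)`, realized on indices
`Fin n → Fin 2`. -/
def kron (n : ℕ) (W : Fin n → Matrix (Fin 2) (Fin 2) ℂ) : QMat n :=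
  fun v w => ∏ j, W j (v j) (w j)

/-- `M` is an `n`-qubit Pauli operator: an `n`-fold Kronecker product of matrices
from `{I₂, X, Y, Z}`. -/
def IsPauliOp (n : ℕ) (M : QMat n) : Prop :=
  ∃ W : Fin n → Matrix (Fin 2) (Fin 2) ℂ,
    (∀ j, W j = pI ∨ W j = pX ∨ W j = pY ∨ W j = pZ) ∧ M = kron n W

/-- Two matrices are equal up to phase if one is a nonzero scalar multiple of the other. -/
def PhaseEq {m : Type*} (A B : Matrix m m ℂ) : Prop := ∃ c : ℂ, c ≠ 0 ∧ A = c • B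

/-- A maximal commuting Pauli class in dimension `d = 2 ^ n`: a set of `d - 1`
pairwise commuting non-identity `n`-qubit Pauli operators, pairwise distinct up to phase. -/
def IsMaxClass (n : ℕ) (C : Set (QMat n)) : Prop :=
  C.Finite ∧ C.ncard = 2 ^ n - 1 ∧
  (∀ U ∈ C, IsPauliOp n U ∧ U ≠ 1) ∧
  (∀ U ∈ C, ∀ V ∈ C, U * V = V * U) ∧
  (∀ U ∈ C, ∀ V ∈ C, U ≠ V → ¬ PhaseEq U V)

/-- Two classes are disjoint if no member of one is equal up to phase to a member of the other. -/
def ClassDisjoint {n : ℕ} (C D : Set (QMat n)) : Prop :=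
  ∀ U ∈ C, ∀ V ∈ D, ¬ PhaseEq U V

/-- Two classes are equal up to phase (as sets of operators). -/
def ClassPhaseEq {n : ℕ} (C D : Set (QMat n)) : Prop :=
  (∀ U ∈ C, ∃ V ∈ D, PhaseEq U V) ∧ (∀ V ∈ D, ∃ U ∈ C, PhaseEq U V)

/-- The standard Hermitian inner product on `ι → ℂ` (conjugate-linear in the first slot). -/
def cinner {ι : Type*} [Fintype ι] (x y : ι → ℂ) : ℂ :=
  ∑ k, (starRingEnd ℂ) (x k) * y k

/-
Up to phase the `n`-qubit Pauli operators are the vectors of `𝔽₂ⁿ × 𝔽₂ⁿ`, and two of them commute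
iff the standard symplectic form vanishes on their labels. A maximal commuting class is thus a
Lagrangian subspace without `0`, and the nine classes are nine pairwise transversal Lagrangians
covering `𝔽₂⁶`. A Lagrangian lies in the union of the first five iff it is transversal to the other
four, so it suffices that exactly six Lagrangians are transversal to four given, pairwise
transversal ones: five of the six are the given classes, and the remaining one is the extra class.

Lagrangians transversal to a fixed one are the graphs of symmetric matrices, and the graphs of `M`
and `N` are transversal iff `det (M - N) ≠ 0`. The diagonal entries and the principal `2 × 2` minors
are coordinates on symmetric `3 × 3` matrices over `𝔽₂` in which, because `2 = 0`, `det (M - N)`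
becomes `q (v - w)` for the hyperbolic quadratic form `q`. With the first of the four Lagrangians at
the origin, the second at infinity and the others at `u` and `w`, the Lagrangians to be counted are
the solutions of `q v = q (v - u) = q (v - w) = 1`, and a character sum shows that there are
`(4 ^ 3 - 2 * 2 ^ 3) / 8 = 6`.
-/

open Module LinearMap
open scoped Finset
open LinearMap (BilinForm)
open LinearMap.BilinForm (mem_orthogonal_iff finrank_orthogonal)

section Lagrangian

variable {K V W : Type*} [Field K] [AddCommGroup V] [Module K V] [AddCommGroup W] [Module K W]

/-- A Lagrangian subspace for a bilinear form: a subspace equal to its own orthogonal complement. -/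
def IsLagrangian (ω : BilinForm K V) (L : Submodule K V) : Prop :=
  ω.orthogonal L = L

variable {ω : BilinForm K V} {L : Submodule K V}

theorem IsLagrangian.mem_iff (hL : IsLagrangian ω L) {v : V} : v ∈ L ↔ ∀ w ∈ L, ω w v = 0 := by
  rw [← mem_orthogonal_iff, hL]

theorem isLagrangian_comap_iff {ω' : BilinForm K W} (Φ : V ≃ₗ[K] W)
    (hΦ : ∀ v w, ω' (Φ v) (Φ w) = ω v w) {L : Submodule K W} :
    IsLagrangian ω (L.comap Φ.toLinearMap) ↔ IsLagrangian ω' L := by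
  have orthogonal_comap : ω.orthogonal (L.comap Φ.toLinearMap) =
      (ω'.orthogonal L).comap Φ.toLinearMap := by
    ext v
    simp [Φ.surjective.forall, hΦ]
  rw [IsLagrangian, IsLagrangian, orthogonal_comap,
    (Submodule.comap_injective_of_surjective Φ.surjective).eq_iff]

variable [FiniteDimensional K V]

theorem IsLagrangian.two_mul_finrank (hω : ω.Nondegenerate) (hL : IsLagrangian ω L) :
    2 * finrank K L = finrank K V := by
  have h := finrank_orthogonal hω L
  rw [hL] at h
  have := L.finrank_le
  omega

theorem isLagrangian_of_isotropic (hω : ω.Nondegenerate) (hL : ∀ v ∈ L, ∀ w ∈ L, ω v w = 0)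
    (hdim : finrank K V ≤ 2 * finrank K L) : IsLagrangian ω L := by
  have isotropic : L ≤ ω.orthogonal L := fun w hw v hv => hL v hv w hw
  refine (Submodule.eq_of_le_of_finrank_le isotropic ?_).symm
  rw [finrank_orthogonal hω]
  omega

theorem IsLagrangian.isCompl (hω : ω.Nondegenerate) {A B : Submodule K V} (hA : IsLagrangian ω A)
    (hB : IsLagrangian ω B) (hAB : Disjoint A B) : IsCompl A B := by
  refine (Submodule.isCompl_iff_disjoint A B ?_).mpr hAB
  have := hA.two_mul_finrank hω
  have := hB.two_mul_finrank hω
  omega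

end Lagrangian

section SymplecticForm

variable {ι K : Type*} [Fintype ι]

/-- The standard symplectic form on `K^ι × K^ι`. -/
def symplecticForm (ι K : Type*) [Fintype ι] [CommRing K] : BilinForm K ((ι → K) × (ι → K)) :=
  LinearMap.mk₂ K (fun v w => v.1 ⬝ᵥ w.2 - v.2 ⬝ᵥ w.1)
    (fun _ _ _ => by simp only [Prod.fst_add, Prod.snd_add, add_dotProduct]; abel)
    (fun _ _ _ => by simp only [Prod.smul_fst, Prod.smul_snd, smul_dotProduct, smul_sub])
    (fun _ _ _ => by simp only [Prod.fst_add, Prod.snd_add, dotProduct_add]; abel)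
    (fun _ _ _ => by simp only [Prod.smul_fst, Prod.smul_snd, dotProduct_smul, smul_sub])

theorem symplecticForm_apply [CommRing K] (v w : (ι → K) × (ι → K)) :
    symplecticForm ι K v w = v.1 ⬝ᵥ w.2 - v.2 ⬝ᵥ w.1 := rfl

theorem isAlt_symplecticForm [CommRing K] : (symplecticForm ι K).IsAlt := fun v => by
  rw [symplecticForm_apply, dotProduct_comm, sub_self]

theorem nondegenerate_symplecticForm [CommRing K] : (symplecticForm ι K).Nondegenerate := by
  have isRefl : (symplecticForm ι K).IsRefl := isAlt_symplecticForm.isRefl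
  refine (IsRefl.nondegenerate_iff_separatingLeft isRefl).mpr fun v hv => ?_
  refine Prod.ext (dotProduct_eq_zero _ fun x => ?_) (dotProduct_eq_zero _ fun z => ?_)
  · simpa [symplecticForm_apply] using hv (0, x)
  · simpa [symplecticForm_apply] using hv (z, 0)

variable [Field K]

theorem orthogonal_graph_mulVecLin (M : Matrix ι ι K) :
    (symplecticForm ι K).orthogonal M.mulVecLin.graph = Mᵀ.mulVecLin.graph := by
  ext v
  have pairing : ∀ x, symplecticForm ι K (x, M *ᵥ x) v = x ⬝ᵥ (v.2 - Mᵀ *ᵥ v.1) := fun x => by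
    rw [symplecticForm_apply, dotProduct_sub, mulVec_transpose, dotProduct_comm x (v.1 ᵥ* M),
      ← dotProduct_mulVec, dotProduct_comm v.1]
  rw [mem_orthogonal_iff, mem_graph_iff, mulVecLin_apply, ← sub_eq_zero]
  constructor
  · intro h
    refine dotProduct_eq_zero _ fun x => ?_
    rw [dotProduct_comm, ← pairing]
    exact h _ rfl
  · rintro h ⟨x, y⟩ (rfl : y = M *ᵥ x)
    rw [pairing, h, dotProduct_zero]

theorem graph_mulVecLin_injective :
    Function.Injective fun M : Matrix ι ι K => M.mulVecLin.graph := by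
  intro M N h
  have mulVec_eq (x : ι → K) : M *ᵥ x = N *ᵥ x := by
    have mem_graph : (x, M *ᵥ x) ∈ M.mulVecLin.graph := rfl
    rwa [show M.mulVecLin.graph = N.mulVecLin.graph from h] at mem_graph
  classical exact ext_of_mulVec_single fun i => mulVec_eq _

theorem isLagrangian_graph_iff {M : Matrix ι ι K} :
    IsLagrangian (symplecticForm ι K) M.mulVecLin.graph ↔ M.IsSymm := by
  rw [IsLagrangian, orthogonal_graph_mulVecLin]
  exact graph_mulVecLin_injective.eq_iff

theorem disjoint_graph_iff [DecidableEq ι] {M N : Matrix ι ι K} :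
    Disjoint M.mulVecLin.graph N.mulVecLin.graph ↔ (M - N).det ≠ 0 := by
  rw [ne_eq, ← exists_mulVec_eq_zero_iff, Submodule.disjoint_def]
  simp only [Prod.forall, mem_graph_iff, mulVecLin_apply, sub_mulVec, sub_eq_zero, not_exists,
    not_and, Prod.mk_eq_zero]
  constructor
  · rintro h x hx hMN
    exact hx (h x _ rfl hMN).1
  · rintro h x _ rfl hMN
    have hx : x = 0 := by_contra fun hx => h x hx hMN
    exact ⟨hx, by rw [hx, mulVec_zero]⟩

theorem exists_eq_graph_of_disjoint {L : Submodule K ((ι → K) × (ι → K))}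
    (hL : IsLagrangian (symplecticForm ι K) L) (hd : Disjoint L (ker (fst K (ι → K) (ι → K)))) :
    ∃ M : Matrix ι ι K, L = M.mulVecLin.graph := by
  have fst_injective : Function.Injective ((fst K (ι → K) (ι → K)).domRestrict L) :=
    injective_domRestrict_iff.mpr hd
  have hdim : finrank K L = finrank K (ι → K) := by
    have := hL.two_mul_finrank nondegenerate_symplecticForm
    rw [finrank_prod] at this
    omega
  obtain ⟨f, rfl⟩ := Submodule.exists_eq_graph (G := L)
    ⟨fst_injective, (injective_iff_surjective_of_finrank_eq_finrank hdim).mp fst_injective⟩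
  classical exact ⟨LinearMap.toMatrix' f, by rw [← toLin'_apply', toLin'_toMatrix']⟩

variable {V : Type*} [AddCommGroup V] [Module K V] [FiniteDimensional K V] {ω : BilinForm K V}
  {A B : Submodule K V}

theorem exists_adapted_isometry (hω : ω.Nondegenerate) (halt : ω.IsAlt) (hA : IsLagrangian ω A)
    (hB : IsLagrangian ω B) (hAB : Disjoint A B) (hι : finrank K V = 2 * Fintype.card ι) :
    ∃ Φ : V ≃ₗ[K] (ι → K) × (ι → K), (∀ v w, symplecticForm ι K (Φ v) (Φ w) = ω v w) ∧
      (mulVecLin 0).graph.comap Φ.toLinearMap = A ∧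
      (ker (fst K (ι → K) (ι → K))).comap Φ.toLinearMap = B := by
  have hcompl : IsCompl A B := hA.isCompl hω hB hAB
  have hdimA : finrank K A = Fintype.card ι := by
    have := hA.two_mul_finrank hω
    omega
  let e : Basis ι K A := (finBasisOfFinrankEq K A hdimA).reindex (Fintype.equivFin ι).symm
  let π : V →ₗ[K] A := A.projectionOnto B hcompl
  let Φ : V →ₗ[K] (ι → K) × (ι → K) :=
    (e.equivFun.toLinearMap ∘ₗ π).prod (LinearMap.pi fun i => ω (e i))
  have coe_π {a b : V} (ha : a ∈ A) (hb : b ∈ B) : (π (a + b) : V) = a := by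
    rw [map_add, Submodule.projectionOnto_apply_of_mem_left hcompl ha,
      (Submodule.projectionOnto_apply_eq_zero_iff hcompl).mpr hb, add_zero]
  have sum_coords (v w : V) : (Φ v).1 ⬝ᵥ (Φ w).2 = ω (π v) w := by
    conv_rhs => rw [← e.sum_equivFun (π v)]
    simp [Φ, dotProduct, -Basis.sum_repr]
  have isometry (v w : V) : symplecticForm ι K (Φ v) (Φ w) = ω v w := by
    obtain ⟨a, b, ha, hb, rfl⟩ := Submodule.codisjoint_iff_exists_add_eq.mp hcompl.codisjoint v
    obtain ⟨a', b', ha', hb', rfl⟩ := Submodule.codisjoint_iff_exists_add_eq.mp hcompl.codisjoint w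
    have haa' : ω a a' = 0 ∧ ω a' a = 0 := ⟨hA.mem_iff.mp ha' a ha, hA.mem_iff.mp ha a' ha'⟩
    have hbb' : ω b b' = 0 := hB.mem_iff.mp hb' b hb
    rw [symplecticForm_apply, dotProduct_comm _ (Φ (a' + b')).1, sum_coords, sum_coords,
      coe_π ha hb, coe_π ha' hb']
    simp only [map_add, LinearMap.add_apply, haa', hbb', ← halt.neg_eq b a']
    ring
  have injective : Function.Injective Φ := by
    refine (injective_iff_map_eq_zero Φ).mpr fun v hv => hω.1 v fun w => ?_
    rw [← isometry, hv, map_zero, LinearMap.zero_apply]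
  have hdim : finrank K V = finrank K ((ι → K) × (ι → K)) := by
    rw [hι, finrank_prod, finrank_fintype_fun_eq_card, two_mul]
  refine ⟨.ofInjectiveOfFinrankEq Φ injective hdim, isometry, ?_, ?_⟩
  · ext v
    have mem_A : (Φ v).2 = 0 ↔ v ∈ A := by
      refine ⟨fun h => hA.mem_iff.mpr fun a ha => ?_,
        fun hv => funext fun i => hA.mem_iff.mp hv (e i) (e i).2⟩
      rw [← coe_π ha B.zero_mem, ← sum_coords, h, dotProduct_zero]
    rw [Submodule.mem_comap, mem_graph_iff, mulVecLin_zero]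
    exact mem_A
  · ext v
    simp [Φ, π, Submodule.projectionOnto_apply_eq_zero_iff]

theorem exists_symmetric_chart [DecidableEq ι] (hω : ω.Nondegenerate) (halt : ω.IsAlt)
    (hA : IsLagrangian ω A) (hB : IsLagrangian ω B) (hAB : Disjoint A B)
    (hι : finrank K V = 2 * Fintype.card ι) :
    ∃ γ : Matrix ι ι K → Submodule K V, Function.Injective γ ∧ γ 0 = A ∧
      (∀ M N, Disjoint (γ M) (γ N) ↔ (M - N).det ≠ 0) ∧
      ∀ L, (∃ M, M.IsSymm ∧ γ M = L) ↔ IsLagrangian ω L ∧ Disjoint L B := by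
  obtain ⟨Φ, isometry, rfl, rfl⟩ := exists_adapted_isometry hω halt hA hB hAB hι
  have comap_disjoint (L L' : Submodule K ((ι → K) × (ι → K))) :
      Disjoint (L.comap Φ.toLinearMap) (L'.comap Φ.toLinearMap) ↔ Disjoint L L' :=
    disjoint_map_orderIso_iff (Submodule.orderIsoMapComap Φ).symm
  refine ⟨fun M => M.mulVecLin.graph.comap Φ.toLinearMap,
    (Submodule.comap_injective_of_surjective Φ.surjective).comp graph_mulVecLin_injective, rfl,
    fun M N => (comap_disjoint _ _).trans disjoint_graph_iff, fun L => ⟨?_, ?_⟩⟩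
  · rintro ⟨M, hM, rfl⟩
    refine ⟨(isLagrangian_comap_iff Φ isometry).mpr (isLagrangian_graph_iff.mpr hM),
      (comap_disjoint _ _).mpr ?_⟩
    rw [Submodule.disjoint_def]
    rintro ⟨x, y⟩ (rfl : y = M *ᵥ x) (rfl : x = 0)
    rw [mulVec_zero, Prod.mk_zero_zero]
  · obtain ⟨L, rfl⟩ : ∃ L', L'.comap Φ.toLinearMap = L := ⟨L.map Φ.toLinearMap,
      Submodule.comap_map_eq_of_injective Φ.injective L⟩
    rintro ⟨hL, hLB⟩
    rw [isLagrangian_comap_iff Φ isometry] at hL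
    obtain ⟨M, rfl⟩ := exists_eq_graph_of_disjoint hL ((comap_disjoint _ _).mp hLB)
    exact ⟨M, isLagrangian_graph_iff.mp hL, rfl⟩

end SymplecticForm

section PrincipalMinors

variable {ι R : Type*} [Fintype ι] [CommRing R]

/-- The hyperbolic quadratic form on `R^ι × R^ι`. -/
def hyperbolicForm (v : (ι → R) × (ι → R)) : R := v.1 ⬝ᵥ v.2

theorem hyperbolicForm_sub [CharP R 2] (v w : (ι → R) × (ι → R)) :
    hyperbolicForm (v - w) = hyperbolicForm v + hyperbolicForm w + symplecticForm ι R v w := by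
  simp only [hyperbolicForm, symplecticForm_apply, Prod.fst_sub, Prod.snd_sub, sub_dotProduct,
    dotProduct_sub, CharTwo.sub_eq_add, dotProduct_comm v.2]
  ring

/-- The principal minors of sizes `1` and `2` of a `3 × 3` matrix; the minor of size `2` listed at
`i` is the one obtained by deleting the `i`-th row and column. -/
def principalMinors (M : Matrix (Fin 3) (Fin 3) R) : (Fin 3 → R) × (Fin 3 → R) :=
  (M.diag, M.adjugate.diag)

theorem det_sub_eq_hyperbolicForm [CharP R 2] {M N : Matrix (Fin 3) (Fin 3) R} (hM : M.IsSymm)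
    (hN : N.IsSymm) :
    (M - N).det = hyperbolicForm (principalMinors M - principalMinors N) := by
  simp only [hyperbolicForm, principalMinors, adjugate_fin_three, det_fin_three, dotProduct,
    Fin.sum_univ_three, Matrix.sub_apply, Prod.fst_sub, Prod.snd_sub, Pi.sub_apply, diag_apply,
    of_apply, cons_val, hM.apply 0 1, hM.apply 0 2, hM.apply 1 2, hN.apply 0 1,
    hN.apply 0 2, hN.apply 1 2]
  grind [CharTwo.two_eq_zero (R := R)]

theorem bijOn_principalMinors :
    Set.BijOn principalMinors {M : Matrix (Fin 3) (Fin 3) (ZMod 2) | M.IsSymm} Set.univ := by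
  refine ⟨Set.mapsTo_univ _ _, fun M hM N hN h => ?_, fun ⟨p, q⟩ _ => ?_⟩
  -- Squares over `ZMod 2` are linear, so a minor `M i i * M j j - M i j ^ 2` determines `M i j`.
  · have diag_eq (i : Fin 3) : M i i = N i i := congrFun (congrArg Prod.fst h) i
    have minor_eq (i : Fin 3) : M.adjugate i i = N.adjugate i i := congrFun (congrArg Prod.snd h) i
    have sq_self (x : ZMod 2) : x * x = x := by decide +revert
    have entry_one_two : M 1 2 = N 1 2 := by
      simpa [adjugate_fin_three, hM.apply 1 2, hN.apply 1 2, diag_eq, sq_self] using minor_eq 0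
    have entry_zero_two : M 0 2 = N 0 2 := by
      simpa [adjugate_fin_three, hM.apply 0 2, hN.apply 0 2, diag_eq, sq_self] using minor_eq 1
    have entry_zero_one : M 0 1 = N 0 1 := by
      simpa [adjugate_fin_three, hM.apply 0 1, hN.apply 0 1, diag_eq, sq_self] using minor_eq 2
    ext i j
    fin_cases i <;> fin_cases j <;>
      simp [diag_eq, entry_one_two, entry_zero_two, entry_zero_one, hM.apply 0 1, hM.apply 0 2,
        hM.apply 1 2, hN.apply 0 1, hN.apply 0 2, hN.apply 1 2]
  · refine ⟨!![p 0, q 2 + p 0 * p 1, q 1 + p 0 * p 2; q 2 + p 0 * p 1, p 1, q 0 + p 1 * p 2;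
      q 1 + p 0 * p 2, q 0 + p 1 * p 2, p 2], ?_, ?_⟩
    · exact IsSymm.ext fun i j => by fin_cases i <;> fin_cases j <;> rfl
    · have minor_eq (a b c : ZMod 2) : a * b - (c + a * b) * (c + a * b) = c := by decide +revert
      ext i <;> fin_cases i <;> simp [principalMinors, adjugate_fin_three, minor_eq]

end PrincipalMinors

section CharacterSum

variable {V R : Type*} [CommRing R]

theorem zmod_two_eq_zero_or_one (x : ZMod 2) : x = 0 ∨ x = 1 := by decide +revert

/-- The sign character `x ↦ (-1) ^ x` of `ZMod 2`. -/
def signChar (R : Type*) [CommRing R] : AddChar (ZMod 2) R := AddChar.zmodChar 2 (neg_one_sq)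

theorem signChar_one : signChar R 1 = -1 := by
  rw [signChar, AddChar.zmodChar_apply, ZMod.val_one, pow_one]

theorem signChar_mul_self (x : ZMod 2) : signChar R x * signChar R x = 1 := by
  rw [← AddChar.map_add_eq_mul, CharTwo.add_self_eq_zero, AddChar.map_zero_eq_one]

theorem one_sub_signChar (x : ZMod 2) : 1 - signChar R x = if x = 1 then 2 else 0 := by
  obtain rfl | rfl := zmod_two_eq_zero_or_one x
  · simp
  · rw [signChar_one, if_pos rfl, sub_neg_eq_add, one_add_one_eq_two]

theorem signChar_injective [NeZero (2 : R)] : Function.Injective (signChar R) := by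
  intro x y hxy
  have values_ne : signChar R 0 ≠ signChar R 1 := by
    rw [AddChar.map_zero_eq_one, signChar_one, ne_eq, eq_neg_iff_add_eq_zero, one_add_one_eq_two]
    exact two_ne_zero
  obtain rfl | rfl := zmod_two_eq_zero_or_one x <;> obtain rfl | rfl := zmod_two_eq_zero_or_one y
  exacts [rfl, absurd hxy values_ne, absurd hxy.symm values_ne, rfl]

theorem addChar_map_sum {A M κ : Type*} [AddCommMonoid A] [CommMonoid M] (ψ : AddChar A M)
    (f : κ → A) (s : Finset κ) : ψ (∑ i ∈ s, f i) = ∏ i ∈ s, ψ (f i) :=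
  map_prod ψ.toMonoidHom (fun i => Multiplicative.ofAdd (f i)) s

theorem sum_signChar_eq_zero [Fintype V] [AddCommGroup V] [Module (ZMod 2) V]
    {f : V →ₗ[ZMod 2] ZMod 2} (hf : f ≠ 0) : ∑ v, signChar ℤ (f v) = 0 := by
  refine AddChar.sum_eq_zero_of_ne_one (ψ := (signChar ℤ).compAddMonoidHom f.toAddMonoidHom) ?_
  obtain ⟨v, hv⟩ := DFunLike.ne_iff.mp hf
  refine AddChar.ne_one_iff.mpr ⟨v, ?_⟩
  have hfv : f v = 1 := Fin.eq_one_of_ne_zero _ hv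
  rw [AddChar.compAddMonoidHom_apply, toAddMonoidHom_coe, hfv, signChar_one]
  decide

variable {ι : Type*} [Fintype ι]

-- By polarization, the product of two signs of translates of the hyperbolic form is the sign of an
-- affine function, and the product of three is the sign of a further translate up to a constant.
theorem signChar_triple_product {u w v : (ι → ZMod 2) × (ι → ZMod 2)} (hu : hyperbolicForm u = 1)
    (hw : hyperbolicForm w = 1) (huw : hyperbolicForm (u - w) = 1) :
    (1 - signChar ℤ (hyperbolicForm v)) * (1 - signChar ℤ (hyperbolicForm (v - u))) *
        (1 - signChar ℤ (hyperbolicForm (v - w))) =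
      1 - signChar ℤ (hyperbolicForm v) - signChar ℤ (hyperbolicForm (v - u)) -
        signChar ℤ (hyperbolicForm (v - w)) + signChar ℤ (hyperbolicForm (v - (u - w))) -
        signChar ℤ (symplecticForm ι (ZMod 2) v u) - signChar ℤ (symplecticForm ι (ZMod 2) v w) +
        signChar ℤ (symplecticForm ι (ZMod 2) v (u - w)) := by
  simp only [hyperbolicForm_sub v, hu, hw, huw, map_sub, CharTwo.sub_eq_add,
    AddChar.map_add_eq_mul, signChar_one]
  have hs := signChar_mul_self (R := ℤ) (hyperbolicForm v)
  generalize signChar ℤ (hyperbolicForm v) = s at *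
  generalize signChar ℤ (symplecticForm ι (ZMod 2) v u) = a
  generalize signChar ℤ (symplecticForm ι (ZMod 2) v w) = b
  linear_combination (a * b * (1 - s) - a - b) * hs

variable [DecidableEq ι]

theorem sum_signChar_hyperbolicForm :
    ∑ v : (ι → ZMod 2) × (ι → ZMod 2), signChar ℤ (hyperbolicForm v) = 2 ^ Fintype.card ι := by
  simp_rw [Fintype.sum_prod_type, hyperbolicForm]
  rw [Fintype.sum_eq_single 0]
  · simp
  · intro p hp
    refine sum_signChar_eq_zero (f := dotProductBilin (ZMod 2) (ZMod 2) p) fun h => hp ?_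
    exact dotProduct_eq_zero _ fun q => LinearMap.congr_fun h q

theorem sum_signChar_symplecticForm {u : (ι → ZMod 2) × (ι → ZMod 2)} (hu : u ≠ 0) :
    ∑ v, signChar ℤ (symplecticForm ι (ZMod 2) v u) = 0 := by
  refine sum_signChar_eq_zero (f := (symplecticForm ι (ZMod 2)).flip u) fun h => hu ?_
  exact nondegenerate_symplecticForm.2 u fun v => LinearMap.congr_fun h v

theorem card_filter_hyperbolicForm_eq_one {u w : (ι → ZMod 2) × (ι → ZMod 2)}
    (hu : hyperbolicForm u = 1) (hw : hyperbolicForm w = 1) (huw : hyperbolicForm (u - w) = 1) :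
    8 * (#{v : (ι → ZMod 2) × (ι → ZMod 2) | hyperbolicForm v = 1 ∧ hyperbolicForm (v - u) = 1 ∧
      hyperbolicForm (v - w) = 1} : ℤ) = 4 ^ Fintype.card ι - 2 * 2 ^ Fintype.card ι := by
  have ne_zero {u : (ι → ZMod 2) × (ι → ZMod 2)} (hu : hyperbolicForm u = 1) : u ≠ 0 := by
    rintro rfl
    exact absurd hu (by simp [hyperbolicForm])
  have translate (u : (ι → ZMod 2) × (ι → ZMod 2)) :
      ∑ v, signChar ℤ (hyperbolicForm (v - u)) = 2 ^ Fintype.card ι :=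
    ((Equiv.subRight u).sum_comp fun v => signChar ℤ (hyperbolicForm v)).trans
      sum_signChar_hyperbolicForm
  calc
    _ = ∑ v, (1 - signChar ℤ (hyperbolicForm v)) * (1 - signChar ℤ (hyperbolicForm (v - u))) *
          (1 - signChar ℤ (hyperbolicForm (v - w))) := by
      rw [Finset.card_filter]
      push_cast
      rw [Finset.mul_sum]
      refine Finset.sum_congr rfl fun v _ => ?_
      simp only [one_sub_signChar]
      split_ifs <;> simp_all
    _ = _ := by
      simp_rw [signChar_triple_product hu hw huw, Finset.sum_add_distrib,
        Finset.sum_sub_distrib, Finset.sum_add_distrib, Finset.sum_sub_distrib]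
      rw [sum_signChar_hyperbolicForm, translate, translate, translate,
        sum_signChar_symplecticForm (ne_zero hu), sum_signChar_symplecticForm (ne_zero hw),
        sum_signChar_symplecticForm (ne_zero huw)]
      simp [← mul_pow]
      ring

end CharacterSum

section SpaceOfDimensionSix

variable {V : Type*} [AddCommGroup V] [Module (ZMod 2) V] [FiniteDimensional (ZMod 2) V]
  {ω : BilinForm (ZMod 2) V}

theorem exists_quadric_chart (hω : ω.Nondegenerate) (halt : ω.IsAlt)
    (hV : finrank (ZMod 2) V = 6) {A B : Submodule (ZMod 2) V} (hA : IsLagrangian ω A)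
    (hB : IsLagrangian ω B) (hAB : Disjoint A B) :
    ∃ γ : (Fin 3 → ZMod 2) × (Fin 3 → ZMod 2) → Submodule (ZMod 2) V, Function.Injective γ ∧
      γ 0 = A ∧ (∀ v w, Disjoint (γ v) (γ w) ↔ hyperbolicForm (v - w) = 1) ∧
      ∀ L, (∃ v, γ v = L) ↔ IsLagrangian ω L ∧ Disjoint L B := by
  obtain ⟨δ, δ_injective, rfl, δ_disjoint, δ_range⟩ :=
    exists_symmetric_chart (ι := Fin 3) hω halt hA hB hAB (by rw [hV, Fintype.card_fin])
  have minors_injOn := bijOn_principalMinors.injOn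
  choose σ hσ using fun v => bijOn_principalMinors.surjOn (Set.mem_univ v)
  have σ_minors {M : Matrix (Fin 3) (Fin 3) (ZMod 2)} (hM : M.IsSymm) : σ (principalMinors M) = M :=
    minors_injOn (hσ _).1 hM (hσ _).2
  have ne_zero_iff (x : ZMod 2) : x ≠ 0 ↔ x = 1 := by decide +revert
  refine ⟨δ ∘ σ, δ_injective.comp (Function.LeftInverse.injective fun v => (hσ v).2),
    congrArg δ ?_, fun v w => ?_, fun L => ?_⟩
  · have minors_zero : principalMinors (0 : Matrix (Fin 3) (Fin 3) (ZMod 2)) = 0 := by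
      simp only [principalMinors, adjugate_zero, diag_zero, Prod.mk_zero_zero]
    rw [← minors_zero, σ_minors isSymm_zero]
  · rw [Function.comp_apply, Function.comp_apply, δ_disjoint, ne_zero_iff,
      det_sub_eq_hyperbolicForm (hσ v).1 (hσ w).1, (hσ v).2, (hσ w).2]
  · rw [← δ_range]
    exact ⟨fun ⟨v, hv⟩ => ⟨σ v, (hσ v).1, hv⟩,
      fun ⟨M, hM, hL⟩ => ⟨principalMinors M, by rw [Function.comp_apply, σ_minors hM, hL]⟩⟩

theorem ncard_isLagrangian_disjoint_four (hω : ω.Nondegenerate) (halt : ω.IsAlt)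
    (hV : finrank (ZMod 2) V = 6) {F : Fin 4 → Submodule (ZMod 2) V}
    (hF : ∀ i, IsLagrangian ω (F i)) (hdisj : Pairwise (Function.onFun Disjoint F)) :
    {L | IsLagrangian ω L ∧ ∀ i, Disjoint L (F i)}.ncard = 6 := by
  obtain ⟨γ, γ_injective, γ_zero, γ_disjoint, γ_range⟩ :=
    exists_quadric_chart hω halt hV (hF 0) (hF 1) (hdisj (by decide))
  obtain ⟨u, hu⟩ := (γ_range (F 2)).mpr ⟨hF 2, hdisj (by decide)⟩
  obtain ⟨w, hw⟩ := (γ_range (F 3)).mpr ⟨hF 3, hdisj (by decide)⟩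
  have disjoint_iff (v) : (hyperbolicForm v = 1 ∧ hyperbolicForm (v - u) = 1 ∧
      hyperbolicForm (v - w) = 1) ↔ ∀ i, Disjoint (γ v) (F i) := by
    simp [Fin.forall_fin_succ, ← γ_zero, ← hu, ← hw, γ_disjoint, ((γ_range (γ v)).mp ⟨v, rfl⟩).2]
  have eq_image : {L | IsLagrangian ω L ∧ ∀ i, Disjoint L (F i)} = γ '' {v | hyperbolicForm v = 1 ∧
      hyperbolicForm (v - u) = 1 ∧ hyperbolicForm (v - w) = 1} := by
    ext L
    simp only [disjoint_iff]
    refine ⟨fun ⟨hL, hd⟩ => ?_, ?_⟩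
    · obtain ⟨v, rfl⟩ := (γ_range L).mpr ⟨hL, hd 1⟩
      exact ⟨v, hd, rfl⟩
    · rintro ⟨v, hv, rfl⟩
      exact ⟨((γ_range _).mp ⟨v, rfl⟩).1, hv⟩
  have count := card_filter_hyperbolicForm_eq_one (u := u) (w := w)
    (by rw [← sub_zero u, ← γ_disjoint, hu, γ_zero]; exact hdisj (by decide))
    (by rw [← sub_zero w, ← γ_disjoint, hw, γ_zero]; exact hdisj (by decide))
    (by rw [← γ_disjoint, hu, hw]; exact hdisj (by decide))
  rw [Fintype.card_fin] at count
  rw [eq_image, Set.ncard_image_of_injective _ γ_injective, ← Finset.coe_filter_univ,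
    Set.ncard_coe_finset]
  omega

end SpaceOfDimensionSix

section Cover

theorem injective_of_pairwise_disjoint {α κ : Type*} [PartialOrder α] [OrderBot α] {f : κ → α}
    (hbot : ∀ i, f i ≠ ⊥) (hdisj : Pairwise (Function.onFun Disjoint f)) :
    Function.Injective f := fun i j hij => by_contra fun hne =>
  hbot i (disjoint_self.mp (by simpa only [Function.onFun, hij] using hdisj hne))

variable {K V κ : Type*} [Semiring K] [AddCommMonoid V] [Module K V] {L : κ → Submodule K V}

theorem forall_disjoint_iff_forall_exists_mem (hL : ∀ v, ∃ i, v ∈ L i)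
    (hdisj : Pairwise (Function.onFun Disjoint L)) {s : Finset κ} (hs : s.Nonempty)
    {T : Submodule K V} : (∀ i ∉ s, Disjoint T (L i)) ↔ ∀ v ∈ T, ∃ i ∈ s, v ∈ L i := by
  refine ⟨fun h v hv => ?_, fun h i hi => Submodule.disjoint_def.mpr fun v hv hvi => ?_⟩
  · obtain ⟨i, hi⟩ := hL v
    by_cases his : i ∈ s
    · exact ⟨i, his, hi⟩
    · obtain ⟨j, hj⟩ := hs
      have v_eq_zero : v = 0 := Submodule.disjoint_def.mp (h i his) v hv hi
      exact ⟨j, hj, v_eq_zero ▸ zero_mem (L j)⟩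
  · obtain ⟨j, hj, hvj⟩ := h v hv
    exact Submodule.disjoint_def.mp (hdisj (ne_of_mem_of_not_mem hj hi)) v hvj hvi

end Cover

section Spread

variable {K V κ : Type*} [Field K] [Finite K] [AddCommGroup V] [Module K V] [FiniteDimensional K V]
  [Fintype κ] {n : ℕ} {L : κ → Submodule K V}

theorem ncard_sdiff_zero (W : Submodule K V) :
    ((W : Set V) \ {0}).ncard = Nat.card K ^ finrank K W - 1 := by
  have : Finite V := finite_of_finite K
  rw [Set.ncard_sdiff_singleton_of_mem W.zero_mem, ← natCard_eq_pow_finrank (V := W)]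
  rfl

theorem exists_isLagrangian_of_pairwise_orthogonal {ω : BilinForm K V} (hω : ω.Nondegenerate)
    (hV : finrank K V = 2 * n) {S : Set V} (h_zero : 0 ∉ S) (hcard : S.ncard = Nat.card K ^ n - 1)
    (hS : ∀ v ∈ S, ∀ w ∈ S, ω v w = 0) : ∃ L, IsLagrangian ω L ∧ S = (L : Set V) \ {0} := by
  have : Finite V := finite_of_finite K
  let L := Submodule.span K S
  have isotropic : ∀ v ∈ L, ∀ w ∈ L, ω v w = 0 := by
    intro v hv w hw
    induction hv, hw using Submodule.span_induction₂ with
    | mem_mem v w hv hw => exact hS v hv w hw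
    | _ => simp_all
  have subset_L : S ⊆ (L : Set V) \ {0} := fun v hv =>
    ⟨Submodule.subset_span hv, ne_of_mem_of_not_mem hv h_zero⟩
  have n_le : n ≤ finrank K L := by
    have ncard_le := Set.ncard_le_ncard subset_L
    rw [hcard, ncard_sdiff_zero] at ncard_le
    have := Nat.one_le_pow (finrank K L) (Nat.card K) Nat.card_pos
    exact (Nat.pow_le_pow_iff_right (Finite.one_lt_card (α := K))).mp (by omega)
  have hL : IsLagrangian ω L := isLagrangian_of_isotropic hω isotropic (by omega)
  refine ⟨L, hL, Set.eq_of_subset_of_ncard_le subset_L ?_⟩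
  have finrank_L : finrank K L = n := by
    have := hL.two_mul_finrank hω
    omega
  rw [ncard_sdiff_zero, finrank_L, hcard]

theorem exists_mem_of_pairwise_disjoint (hL : ∀ i, finrank K (L i) = n) (hV : finrank K V = 2 * n)
    (hκ : Fintype.card κ = Nat.card K ^ n + 1) (hdisj : Pairwise (Function.onFun Disjoint L))
    (v : V) : ∃ i, v ∈ L i := by
  have : Finite V := finite_of_finite K
  have punctured_disjoint : Pairwise (Function.onFun Disjoint fun i => (L i : Set V) \ {0}) :=
    fun i j hij => Set.disjoint_left.mpr fun v hi hj =>
      hi.2 (Submodule.disjoint_def.mp (hdisj hij) v hi.1 hj.1)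
  have ncard_union : (⋃ i, (L i : Set V) \ {0}).ncard = Nat.card K ^ (2 * n) - 1 := by
    rw [Set.ncard_iUnion_of_finite (fun _ => Set.toFinite _) punctured_disjoint,
      finsum_eq_sum_of_fintype]
    simp only [ncard_sdiff_zero, hL, Finset.sum_const, Finset.card_univ, hκ, smul_eq_mul]
    rw [pow_mul', ← one_pow 2, Nat.sq_sub_sq, one_pow]
  have union_eq : (⋃ i, (L i : Set V) \ {0}) = ((⊤ : Submodule K V) : Set V) \ {0} := by
    refine Set.eq_of_subset_of_ncard_le (by simp) ?_
    rw [ncard_sdiff_zero, ncard_union, finrank_top, hV]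
  obtain rfl | hv := eq_or_ne v 0
  · have : Nonempty κ := Fintype.card_pos_iff.mp (by omega)
    exact ⟨Classical.arbitrary κ, zero_mem _⟩
  · have mem_union : v ∈ ⋃ i, (L i : Set V) \ {0} := union_eq ▸ ⟨Submodule.mem_top, hv⟩
    obtain ⟨i, hi⟩ := Set.mem_iUnion.mp mem_union
    exact ⟨i, hi.1⟩

end Spread

section ExtraLagrangian

variable {V κ : Type*} [AddCommGroup V] [Module (ZMod 2) V] [FiniteDimensional (ZMod 2) V]
  {ω : BilinForm (ZMod 2) V} [Fintype κ] {L : κ → Submodule (ZMod 2) V}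

theorem existsUnique_isLagrangian_of_subset_union (hω : ω.Nondegenerate) (halt : ω.IsAlt)
    (hV : finrank (ZMod 2) V = 6) (hL : ∀ i, IsLagrangian ω (L i))
    (hdisj : Pairwise (Function.onFun Disjoint L)) (hκ : Fintype.card κ = 9) {s : Finset κ}
    (hs : #s = 5) :
    ∃! T, IsLagrangian ω T ∧ (∀ v ∈ T, ∃ i ∈ s, v ∈ L i) ∧ ∀ i ∈ s, T ≠ L i := by
  have finrank_L (i) : finrank (ZMod 2) (L i) = 3 := by
    have := (hL i).two_mul_finrank hω
    omega
  let N : Set (Submodule (ZMod 2) V) := {T | IsLagrangian ω T ∧ ∀ i ∉ s, Disjoint T (L i)}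
  have ncard_N : N.ncard = 6 := by
    classical
    have card_compl : Fintype.card {i // i ∉ s} = 4 := by
      rw [Fintype.card_subtype_compl, hκ, Fintype.card_coe, hs]
    let e : {i // i ∉ s} ≃ Fin 4 := Fintype.equivFinOfCardEq card_compl
    have := ncard_isLagrangian_disjoint_four hω halt hV (F := fun j => L (e.symm j))
      (fun j => hL _) fun j k hjk => hdisj (by simpa [Subtype.coe_inj] using hjk)
    rw [← this]
    simp [N, e.symm.forall_congr_left]
  have L_injective : Function.Injective L := injective_of_pairwise_disjoint
    (fun i => Submodule.one_le_finrank_iff.mp (by simp only [finrank_L, Nat.one_le_ofNat])) hdisj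
  have image_subset : L '' s ⊆ N := by
    rintro _ ⟨i, hi, rfl⟩
    exact ⟨hL i, fun j hj => hdisj (ne_of_mem_of_not_mem hi hj)⟩
  have ncard_sdiff : (N \ L '' s).ncard = 1 := by
    rw [Set.ncard_sdiff image_subset, ncard_N, Set.ncard_image_of_injective _ L_injective,
      Set.ncard_coe_finset, hs]
  have mem_diff (T) : T ∈ N \ L '' s ↔
      IsLagrangian ω T ∧ (∀ v ∈ T, ∃ i ∈ s, v ∈ L i) ∧ ∀ i ∈ s, T ≠ L i := by
    have covered (v : V) : ∃ i, v ∈ L i :=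
      exists_mem_of_pairwise_disjoint finrank_L hV (by rw [hκ, Nat.card_zmod]; norm_num) hdisj v
    have s_nonempty : s.Nonempty := Finset.card_pos.mp (by omega)
    simp only [N, Set.mem_sdiff, Set.mem_ofPred_eq, Set.mem_image, not_exists, not_and, and_assoc,
      forall_disjoint_iff_forall_exists_mem covered hdisj s_nonempty, SetLike.mem_coe,
      ne_comm (a := T), ne_eq]
  obtain ⟨T, hT⟩ := Set.ncard_eq_one.mp ncard_sdiff
  simp_rw [← mem_diff, hT]
  exact ⟨T, rfl, fun _ h => h⟩

end ExtraLagrangian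

section Kronecker

variable {n : ℕ}

theorem kron_mul_kron (W W' : Fin n → Matrix (Fin 2) (Fin 2) ℂ) :
    kron n W * kron n W' = kron n fun j => W j * W' j := by
  ext v w
  simp only [Matrix.mul_apply, kron, Finset.prod_univ_sum, Fintype.piFinset_univ,
    Finset.prod_mul_distrib]

theorem kron_smul (c : Fin n → ℂ) (W : Fin n → Matrix (Fin 2) (Fin 2) ℂ) :
    (kron n fun j => c j • W j) = (∏ j, c j) • kron n W := by
  ext v w
  simp only [kron, Matrix.smul_apply, smul_eq_mul, Finset.prod_mul_distrib]

theorem kron_one : (kron n fun _ => 1) = 1 := by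
  ext v w
  simp only [kron, Matrix.one_apply, Finset.prod_ite_zero, Finset.prod_const_one, Finset.mem_univ,
    true_imp_iff, funext_iff]

end Kronecker

section PauliLabels

variable {n : ℕ}

/-- Labels `(x, z)` of the `n`-qubit Pauli operators up to phase: `x` and `z` record the qubits at
which a factor `X` or `Z` occurs, and `Y` counts as both. -/
abbrev PauliLabel (n : ℕ) := (Fin n → ZMod 2) × (Fin n → ZMod 2)

/-- The single-qubit Pauli matrix labelled by `(x, z)`, equal to `X ^ x * Z ^ z` up to phase. -/
def pauliMatrix (x z : ZMod 2) : Matrix (Fin 2) (Fin 2) ℂ :=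
  if x = 0 then if z = 0 then pI else pZ else if z = 0 then pX else pY

theorem exists_pauliMatrix_eq_iff {M : Matrix (Fin 2) (Fin 2) ℂ} :
    (∃ x z, pauliMatrix x z = M) ↔ M = pI ∨ M = pX ∨ M = pY ∨ M = pZ := by
  constructor
  · rintro ⟨x, z, rfl⟩
    unfold pauliMatrix
    split_ifs <;> simp
  · rintro (rfl | rfl | rfl | rfl)
    exacts [⟨0, 0, rfl⟩, ⟨1, 0, rfl⟩, ⟨1, 1, rfl⟩, ⟨0, 1, rfl⟩]

theorem pauliMatrix_mul_self (x z : ZMod 2) : pauliMatrix x z * pauliMatrix x z = 1 := by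
  unfold pauliMatrix
  split_ifs <;> simp [pI, pX, pY, pZ, one_fin_two]

theorem pauliMatrix_mul_comm (x z x' z' : ZMod 2) :
    pauliMatrix x z * pauliMatrix x' z' =
      signChar ℂ (x * z' - z * x') • (pauliMatrix x' z' * pauliMatrix x z) := by
  obtain rfl | rfl := zmod_two_eq_zero_or_one x <;>
    obtain rfl | rfl := zmod_two_eq_zero_or_one z <;>
    obtain rfl | rfl := zmod_two_eq_zero_or_one x' <;>
    obtain rfl | rfl := zmod_two_eq_zero_or_one z' <;>
    simp [pauliMatrix, pI, pX, pY, pZ, signChar_one, CharTwo.sub_eq_add]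

/-- The `n`-qubit Pauli operator labelled by `v`: up to phase, `X ^ v.1 * Z ^ v.2`. -/
def pauliOp (v : PauliLabel n) : QMat n :=
  kron n fun j => pauliMatrix (v.1 j) (v.2 j)

theorem pauliOp_zero : pauliOp (0 : PauliLabel n) = 1 := kron_one

theorem isPauliOp_iff {M : QMat n} : IsPauliOp n M ↔ ∃ v, pauliOp v = M := by
  constructor
  · rintro ⟨W, hW, rfl⟩
    choose x z hxz using fun j => exists_pauliMatrix_eq_iff.mpr (hW j)
    exact ⟨(x, z), congrArg (kron n) (funext hxz)⟩
  · rintro ⟨v, rfl⟩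
    exact ⟨_, fun j => exists_pauliMatrix_eq_iff.mp ⟨v.1 j, v.2 j, rfl⟩, rfl⟩

theorem pauliOp_mul_self (v : PauliLabel n) : pauliOp v * pauliOp v = 1 := by
  simp only [pauliOp, kron_mul_kron, pauliMatrix_mul_self, kron_one]

theorem pauliOp_mul_comm (v w : PauliLabel n) :
    pauliOp v * pauliOp w =
      signChar ℂ (symplecticForm (Fin n) (ZMod 2) v w) • (pauliOp w * pauliOp v) := by
  simp only [pauliOp, kron_mul_kron, pauliMatrix_mul_comm (v.1 _), kron_smul]
  rw [← addChar_map_sum, Finset.sum_sub_distrib, symplecticForm_apply, dotProduct, dotProduct]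

theorem pauliOp_mul_eq_smul_iff {v w : PauliLabel n} {c : ℂ} :
    pauliOp v * pauliOp w = c • (pauliOp w * pauliOp v) ↔
      signChar ℂ (symplecticForm (Fin n) (ZMod 2) v w) = c := by
  have ne_zero : pauliOp w * pauliOp v ≠ 0 := fun h => by
    have := congrArg (fun M => pauliOp w * M * pauliOp v) h
    simp [← mul_assoc, pauliOp_mul_self] at this
  rw [pauliOp_mul_comm v w]
  exact (smul_left_injective ℂ ne_zero).eq_iff

theorem commute_pauliOp_iff {v w : PauliLabel n} :
    pauliOp v * pauliOp w = pauliOp w * pauliOp v ↔ symplecticForm (Fin n) (ZMod 2) v w = 0 := by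
  rw [← one_smul ℂ (pauliOp w * pauliOp v), pauliOp_mul_eq_smul_iff,
    ← AddChar.map_zero_eq_one (signChar ℂ), signChar_injective.eq_iff]

theorem phaseEq_pauliOp_iff {v w : PauliLabel n} :
    PhaseEq (pauliOp v) (pauliOp w) ↔ v = w := by
  refine ⟨fun ⟨c, _, hvw⟩ => ?_, fun h => ⟨1, one_ne_zero, by rw [h, one_smul]⟩⟩
  rw [← sub_eq_zero]
  refine nondegenerate_symplecticForm.1 _ fun u => ?_
  have same_sign : signChar ℂ (symplecticForm (Fin n) (ZMod 2) v u) =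
      signChar ℂ (symplecticForm (Fin n) (ZMod 2) w u) := by
    rw [← pauliOp_mul_eq_smul_iff, hvw, smul_mul_assoc, mul_smul_comm, pauliOp_mul_comm w u,
      smul_comm]
  rw [map_sub, LinearMap.sub_apply, signChar_injective same_sign, sub_self]

theorem pauliOp_injective : Function.Injective (pauliOp : PauliLabel n → QMat n) := fun _ _ h =>
  phaseEq_pauliOp_iff.mp ⟨1, one_ne_zero, by rw [h, one_smul]⟩

end PauliLabels

section PauliClasses

variable {n : ℕ} {L L' : Submodule (ZMod 2) (PauliLabel n)}

/-- The non-identity Pauli operators with labels in a subspace `L`, each taken with the phase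
chosen in `pauliOp`. -/
def pauliClass (L : Submodule (ZMod 2) (PauliLabel n)) : Set (QMat n) :=
  pauliOp '' ((L : Set (PauliLabel n)) \ {0})

theorem ncard_pauliClass : (pauliClass L).ncard = 2 ^ finrank (ZMod 2) L - 1 := by
  rw [pauliClass, Set.ncard_image_of_injective _ pauliOp_injective, ncard_sdiff_zero,
    Nat.card_zmod]

theorem finrank_pauliLabel : finrank (ZMod 2) (PauliLabel n) = 2 * n := by
  rw [finrank_prod, finrank_fintype_fun_eq_card, Fintype.card_fin, two_mul]

theorem isMaxClass_pauliClass (hL : IsLagrangian (symplecticForm (Fin n) (ZMod 2)) L) :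
    IsMaxClass n (pauliClass L) := by
  have finrank_L : finrank (ZMod 2) L = n := Nat.eq_of_mul_eq_mul_left two_pos
    ((hL.two_mul_finrank nondegenerate_symplecticForm).trans finrank_pauliLabel)
  refine ⟨(Set.toFinite _).image _, by rw [ncard_pauliClass, finrank_L], ?_, ?_, ?_⟩
  · rintro _ ⟨v, hv, rfl⟩
    exact ⟨isPauliOp_iff.mpr ⟨v, rfl⟩, pauliOp_zero ▸ pauliOp_injective.ne hv.2⟩
  · rintro _ ⟨v, hv, rfl⟩ _ ⟨w, hw, rfl⟩
    exact commute_pauliOp_iff.mpr (hL.mem_iff.mp hw.1 v hv.1)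
  · rintro _ ⟨v, _, rfl⟩ _ ⟨w, _, rfl⟩ hne
    rw [phaseEq_pauliOp_iff]
    exact fun h => hne (congrArg pauliOp h)

theorem isMaxClass_iff {C : Set (QMat n)} : IsMaxClass n C ↔
    ∃ L, IsLagrangian (symplecticForm (Fin n) (ZMod 2)) L ∧ pauliClass L = C := by
  refine ⟨fun ⟨_, hcard, hpauli, hcomm, _⟩ => ?_, ?_⟩
  · have image_preimage : pauliOp '' (pauliOp ⁻¹' C) = C :=
      Set.image_preimage_eq_of_subset fun U hU => isPauliOp_iff.mp (hpauli U hU).1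
    obtain ⟨L, hL, hCL⟩ := exists_isLagrangian_of_pairwise_orthogonal nondegenerate_symplecticForm
      finrank_pauliLabel (S := pauliOp ⁻¹' C) (fun h => (hpauli _ h).2 pauliOp_zero)
      (by rw [← Set.ncard_image_of_injective _ pauliOp_injective, image_preimage, hcard,
        Nat.card_zmod])
      fun v hv w hw => commute_pauliOp_iff.mp (hcomm _ hv _ hw)
    exact ⟨L, hL, by rw [pauliClass, ← hCL, image_preimage]⟩
  · rintro ⟨L, hL, rfl⟩
    exact isMaxClass_pauliClass hL

theorem classDisjoint_pauliClass_iff :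
    ClassDisjoint (pauliClass L) (pauliClass L') ↔ Disjoint L L' := by
  simp only [ClassDisjoint, pauliClass, Set.forall_mem_image, phaseEq_pauliOp_iff,
    Submodule.disjoint_def, Set.mem_sdiff, SetLike.mem_coe, Set.mem_singleton_iff]
  exact ⟨fun h v hv hv' => by_contra fun hv_ne => h ⟨hv, hv_ne⟩ ⟨hv', hv_ne⟩ rfl,
    fun h v hv w hw hvw => hv.2 (h v hv.1 (hvw ▸ hw.1))⟩

theorem classPhaseEq_pauliClass_iff :
    ClassPhaseEq (pauliClass L) (pauliClass L') ↔ L = L' := by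
  simp only [ClassPhaseEq, pauliClass, Set.forall_mem_image, Set.exists_mem_image,
    phaseEq_pauliOp_iff, exists_eq_right, exists_eq_right']
  refine ⟨fun ⟨h, h'⟩ => SetLike.ext fun v => ?_, fun h => by simp [h]⟩
  obtain rfl | hv := eq_or_ne v 0
  · simp only [zero_mem]
  · exact ⟨fun hvL => (h ⟨hvL, hv⟩).1, fun hvL => (h' ⟨hvL, hv⟩).1⟩

theorem forall_exists_phaseEq_iff {κ : Type*} {s : Finset κ} (hs : s.Nonempty)
    {F : κ → Submodule (ZMod 2) (PauliLabel n)} :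
    (∀ U ∈ pauliClass L, ∃ V ∈ ⋃ i ∈ s, pauliClass (F i), PhaseEq U V) ↔
      ∀ v ∈ L, ∃ i ∈ s, v ∈ F i := by
  simp only [pauliClass, ← Set.image_iUnion₂, Set.forall_mem_image, Set.exists_mem_image,
    phaseEq_pauliOp_iff, exists_eq_right', Set.mem_iUnion₂, exists_prop]
  refine ⟨fun h v hv => ?_, fun h v hv => ?_⟩
  · obtain rfl | hv_ne := eq_or_ne v 0
    · exact hs.imp fun i hi => ⟨hi, zero_mem _⟩
    · obtain ⟨i, hi, hvi⟩ := h ⟨hv, hv_ne⟩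
      exact ⟨i, hi, hvi.1⟩
  · obtain ⟨i, hi, hvi⟩ := h v hv.1
    exact ⟨i, hi, hvi, hv.2⟩

end PauliClasses

/-- Given a complete set of nine Pauli classes in dimension `d = 8`,
there is a unique (up to phase) maximal commuting Pauli class `T`, not equal up to
phase to any of `C 0, …, C 4`, all of whose members are equal up to phase to members
of `C 0 ∪ ⋯ ∪ C 4`. -/
theorem unique_extra_class_d8 (C : Fin 9 → Set (QMat 3))
    (hmax : ∀ i, IsMaxClass 3 (C i))
    (hdisj : ∀ i j, i ≠ j → ClassDisjoint (C i) (C j)) :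
    ∃ T : Set (QMat 3),
      (IsMaxClass 3 T ∧
        (∀ U ∈ T, ∃ V ∈ C 0 ∪ C 1 ∪ C 2 ∪ C 3 ∪ C 4, PhaseEq U V) ∧
        (∀ i : Fin 9, i.val < 5 → ¬ ClassPhaseEq T (C i))) ∧
      ∀ T' : Set (QMat 3),
        (IsMaxClass 3 T' ∧
          (∀ U ∈ T', ∃ V ∈ C 0 ∪ C 1 ∪ C 2 ∪ C 3 ∪ C 4, PhaseEq U V) ∧
          (∀ i : Fin 9, i.val < 5 → ¬ ClassPhaseEq T' (C i))) →
        ClassPhaseEq T T' := by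
  choose L hL hLC using fun i => isMaxClass_iff.mp (hmax i)
  obtain rfl : (fun i => pauliClass (L i)) = C := funext hLC
  have L_disjoint : Pairwise (Function.onFun Disjoint L) := fun i j hij =>
    classDisjoint_pauliClass_iff.mp (hdisj i j hij)
  let s : Finset (Fin 9) := {0, 1, 2, 3, 4}
  have mem_s (i) : i ∈ s ↔ i.val < 5 := by decide +revert
  obtain ⟨T, hT, T_unique⟩ := existsUnique_isLagrangian_of_subset_union
    nondegenerate_symplecticForm isAlt_symplecticForm finrank_pauliLabel hL L_disjoint
    (Fintype.card_fin 9) (s := s) rfl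
  have union_eq : pauliClass (L 0) ∪ pauliClass (L 1) ∪ pauliClass (L 2) ∪ pauliClass (L 3) ∪
      pauliClass (L 4) = ⋃ i ∈ s, pauliClass (L i) := by
    simp [s, Set.union_assoc]
  simp only [union_eq, ← mem_s]
  have covered_iff (T) := forall_exists_phaseEq_iff (L := T) (F := L) (s := s) ⟨0, by decide⟩
  refine ⟨pauliClass T, ⟨isMaxClass_pauliClass hT.1, (covered_iff T).mpr hT.2.1, fun i hi h =>
    hT.2.2 i hi (classPhaseEq_pauliClass_iff.mp h)⟩, ?_⟩
  rintro T' ⟨hT', hcover, hne⟩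
  obtain ⟨M, hM, rfl⟩ := isMaxClass_iff.mp hT'
  exact classPhaseEq_pauliClass_iff.mpr (T_unique M ⟨hM, (covered_iff M).mp hcover, fun i hi h =>
    hne i hi (classPhaseEq_pauliClass_iff.mpr h)⟩).symm
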